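/- Let q₁, q₂ ∈ (0,1], ε ≥ 0, and let (σ_T)_{T≥1} be positive reals with σ_T² ≥ c·T for some c > 0 and all sufficiently large T. Then |δ_S(σ_T, q₁, T, ε) − δ_S(σ_T·q₂/q₁, q₂, T, ε)| → 0 as T → ∞. -/

import Mathlib

/-!
Rescaled by the noise level, the mixture `P_{σ,q}` has likelihood ratio `1 + q(L_a - 1)` with
respect to `N(0,1)`, where `a = 1/σ` and `L_a(z) = e^{az - a²/2}`. The privacy profile is thus
`E[max(∏ᵢ g(zᵢ) - e^ε, 0)]` for this ratio `g` and independent standard Gaussian `zᵢ`. Two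
profiles become expectations over the same space, and as `x ↦ max(x - e^ε, 0)` is 1-Lipschitz,
their difference is at most the `L¹`, hence the `L²`, distance of the two product likelihood
ratios, whatever `ε` is. By independence the squared `L²` distance is `A^T - 2B^T + C^T`, where
`A`, `B`, `C` are explicit one-coordinate second moments because `E[L_a L_b] = e^{ab}`.

With `u = 1/σ_T² = O(1/T)`, each of `A`, `B`, `C` has the form `1 + w(e^{ku} - 1)` with
`wk = q₁²`; this is where the choice of noise `σ_T q₂/q₁` enters. So each is
`1 + q₁²u + o(1/T)`, the `T`-th powers all have the same asymptotics, and
`A^T - 2B^T + C^T → 0`.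
-/

open MeasureTheory ProbabilityTheory Real Filter

/-- Density of the dominating-pair mixture `P_{σ,q}` for the Poisson subsampled Gaussian
mechanism with sensitivity 1: `p_{σ,q}(t) = q·φ_σ(t−1) + (1−q)·φ_σ(t)`. -/
noncomputable def mixDensity (σ q t : ℝ) : ℝ :=
  q * gaussianPDFReal 1 (σ ^ 2).toNNReal t + (1 - q) * gaussianPDFReal 0 (σ ^ 2).toNNReal t

/-- The mixture measure `P_{σ,q}`. -/
noncomputable def mixMeasure (σ q : ℝ) : Measure ℝ :=
  MeasureTheory.volume.withDensity fun t => ENNReal.ofReal (mixDensity σ q t)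

/-- The privacy loss function `t ↦ ln(p_{σ,q}(t)/φ_σ(t))`. -/
noncomputable def plrv (σ q t : ℝ) : ℝ :=
  Real.log (mixDensity σ q t / gaussianPDFReal 0 (σ ^ 2).toNNReal t)

/-- Tight privacy profile (accounting oracle) of the `T`-fold composition of the Poisson
subsampled Gaussian mechanism: `δ_S(σ, q, T, ε) = E_{s ∼ L_{σ,q,T}}[max(1 − e^{ε−s}, 0)]`,
where `L_{σ,q,T}` is the sum of `T` independent copies of the PLRV. -/
noncomputable def deltaS (σ q : ℝ) (T : ℕ) (ε : ℝ) : ℝ :=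
  ∫ x : Fin T → ℝ, max (1 - Real.exp (ε - ∑ i, plrv σ q (x i))) 0
    ∂(Measure.pi fun _ => mixMeasure σ q)

open scoped Topology

lemma withDensity_map {α β : Type*} [MeasurableSpace α] [MeasurableSpace β] {μ : Measure α}
    {f : α → β} {g : β → ENNReal} (hf : Measurable f) (hg : Measurable g) :
    (μ.map f).withDensity g = (μ.withDensity (g ∘ f)).map f := by
  ext s hs
  rw [withDensity_apply _ hs, setLIntegral_map hs hg hf, Measure.map_apply hf hs,
    withDensity_apply _ (hf hs)]
  rfl

section ProductMeasure

variable {ι : Type*} [Fintype ι]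

lemma pi_withDensity_ofReal {α : ι → Type*} [∀ i, MeasurableSpace (α i)]
    {μ : ∀ i, Measure (α i)} [∀ i, SigmaFinite (μ i)] {g : ∀ i, α i → ℝ}
    (hg : ∀ i x, 0 ≤ g i x) (hgi : ∀ i, Integrable (g i) (μ i)) :
    Measure.pi (fun i ↦ (μ i).withDensity fun x ↦ ENNReal.ofReal (g i x)) =
      (Measure.pi μ).withDensity fun x ↦ ENNReal.ofReal (∏ i, g i (x i)) := by
  have (i : ι) : IsFiniteMeasure ((μ i).withDensity fun x ↦ ENNReal.ofReal (g i x)) :=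
    isFiniteMeasure_withDensity_ofReal (hgi i).2
  refine Measure.pi_eq fun s hs ↦ ?_
  have hint : Integrable (fun x : ∀ i, α i ↦ ∏ i, g i (x i))
      (Measure.pi fun i ↦ (μ i).restrict (s i)) :=
    Integrable.fintype_prod_dep fun i ↦ (hgi i).restrict
  rw [withDensity_apply _ (MeasurableSet.univ_pi hs), Measure.restrict_pi_pi,
    ← ofReal_integral_eq_lintegral_ofReal hint
      (ae_of_all _ fun x ↦ Finset.prod_nonneg fun i _ ↦ hg i (x i)),
    integral_fintype_prod_eq_prod, ENNReal.ofReal_prod_of_nonneg fun i _ ↦ integral_nonneg (hg i)]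
  refine Finset.prod_congr rfl fun i _ ↦ ?_
  rw [withDensity_apply _ (hs i),
    ofReal_integral_eq_lintegral_ofReal (hgi i).restrict (ae_of_all _ (hg i))]

variable {α : Type*} [MeasurableSpace α] {ν : Measure α} [SigmaFinite ν]

lemma integral_pi_withDensity_max_one_sub_exp {g : α → ℝ} (hpos : ∀ x, 0 < g x)
    (hg : Measurable g) (hgi : Integrable g ν) (ε : ℝ) :
    ∫ x : ι → α, max (1 - exp (ε - ∑ i, Real.log (g (x i)))) 0
        ∂Measure.pi (fun _ ↦ ν.withDensity fun x ↦ ENNReal.ofReal (g x)) =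
      ∫ x : ι → α, max (∏ i, g (x i) - exp ε) 0 ∂Measure.pi fun _ ↦ ν := by
  rw [pi_withDensity_ofReal (fun _ x ↦ (hpos x).le) fun _ ↦ hgi,
    integral_withDensity_eq_integral_toReal_smul (by fun_prop)
      (ae_of_all _ fun _ ↦ ENNReal.ofReal_lt_top)]
  congr with x
  have hP : 0 < ∏ i, g (x i) := Finset.prod_pos fun i _ ↦ hpos (x i)
  rw [ENNReal.toReal_ofReal hP.le, smul_eq_mul, ← Real.log_prod fun i _ ↦ (hpos (x i)).ne',
    exp_sub, exp_log hP, mul_max_of_nonneg _ _ hP.le, mul_sub, mul_div_cancel₀ _ hP.ne', mul_one,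
    mul_zero]

lemma memLp_two_fintype_prod {f : α → ℝ} (hf : MemLp f 2 ν) :
    MemLp (fun x : ι → α ↦ ∏ i, f (x i)) 2 (Measure.pi fun _ ↦ ν) := by
  rw [memLp_two_iff_integrable_sq]
  · simp_rw [← Finset.prod_pow]
    exact Integrable.fintype_prod (f := fun _ x ↦ f x ^ 2) fun _ ↦ hf.integrable_sq
  · exact Finset.aestronglyMeasurable_fun_prod _ fun i _ ↦
      hf.aestronglyMeasurable.comp_quasiMeasurePreserving
        (Measure.quasiMeasurePreserving_eval (fun _ ↦ ν) i)

lemma integral_prod_mul_prod (f g : α → ℝ) :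
    ∫ x : ι → α, (∏ i, f (x i)) * ∏ i, g (x i) ∂Measure.pi (fun _ ↦ ν) =
      (∫ x, f x * g x ∂ν) ^ Fintype.card ι := by
  simp_rw [← Finset.prod_mul_distrib]
  exact integral_fintype_prod_eq_pow fun x ↦ f x * g x

end ProductMeasure

section SecondMoment

variable {Ω : Type*} [MeasurableSpace Ω]

lemma integral_sq_sub {μ : Measure Ω} {f g : Ω → ℝ} (hf : MemLp f 2 μ) (hg : MemLp g 2 μ) :
    ∫ x, (f x - g x) ^ 2 ∂μ = ∫ x, f x * f x ∂μ - 2 * ∫ x, f x * g x ∂μ + ∫ x, g x * g x ∂μ := by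
  have hff : Integrable (fun x ↦ f x * f x) μ := hf.integrable_mul hf
  have hfg : Integrable (fun x ↦ 2 * (f x * g x)) μ := (hf.integrable_mul hg).const_mul 2
  have hgg : Integrable (fun x ↦ g x * g x) μ := hg.integrable_mul hg
  have hsub : Integrable (fun x ↦ f x * f x - 2 * (f x * g x)) μ := hff.sub hfg
  rw [← integral_const_mul, ← integral_sub hff hfg, ← integral_add hsub hgg]
  congr with x
  ring

variable {μ : Measure Ω} [IsProbabilityMeasure μ]

lemma sq_integral_le_integral_sq {f : Ω → ℝ} (hf : MemLp f 2 μ) :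
    (∫ x, f x ∂μ) ^ 2 ≤ ∫ x, f x ^ 2 ∂μ :=
  sub_nonneg.1 ((variance_nonneg f μ).trans_eq (variance_eq_sub hf))

lemma sq_integral_max_sub_integral_max_le {f g : Ω → ℝ} (hf : MemLp f 2 μ) (hg : MemLp g 2 μ)
    (K : ℝ) :
    (∫ x, max (f x - K) 0 ∂μ - ∫ x, max (g x - K) 0 ∂μ) ^ 2 ≤ ∫ x, (f x - g x) ^ 2 ∂μ := by
  have hf' : MemLp (fun x ↦ max (f x - K) 0) 2 μ := (hf.sub (memLp_const K)).pos_part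
  have hg' : MemLp (fun x ↦ max (g x - K) 0) 2 μ := (hg.sub (memLp_const K)).pos_part
  rw [← integral_sub (hf'.integrable one_le_two) (hg'.integrable one_le_two)]
  refine (sq_integral_le_integral_sq (hf'.sub hg')).trans
    (integral_mono (hf'.sub hg').integrable_sq (hf.sub hg).integrable_sq fun x ↦ sq_le_sq.2 ?_)
  simpa using abs_max_sub_max_le_abs (f x - K) (g x - K) 0

end SecondMoment

section Asymptotics

open Asymptotics

lemma abs_pow_le_exp_of_abs_sub_one_le_div {x C : ℝ} {k n : ℕ} (hC : 0 ≤ C) (hkn : k ≤ n)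
    (hx : |x - 1| ≤ C / n) : |x| ^ k ≤ exp C := by
  have hx_exp : |x| ≤ exp (C / n) := by
    have htri : |x| ≤ |x - 1| + 1 := by simpa using abs_add_le (x - 1) 1
    linarith [add_one_le_exp (C / n)]
  calc |x| ^ k ≤ exp (C / n) ^ k := by gcongr
    _ = exp (k / n * C) := by rw [← exp_nat_mul]; ring_nf
    _ ≤ exp C := exp_le_exp.2 (mul_le_of_le_one_left hC
        (div_le_one_of_le₀ (Nat.cast_le.2 hkn) n.cast_nonneg))

lemma isBigO_pow_pred {a : ℕ → ℝ} (ha : (fun n ↦ a n - 1) =O[atTop] fun n ↦ (n : ℝ)⁻¹) :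
    (fun n ↦ a n ^ (n - 1)) =O[atTop] fun _ ↦ (1 : ℝ) := by
  obtain ⟨C, hC, hbound⟩ := ha.exists_nonneg
  refine IsBigO.of_bound (exp C) (hbound.bound.mono fun n hn ↦ ?_)
  rw [norm_pow, norm_one, mul_one]
  exact abs_pow_le_exp_of_abs_sub_one_le_div hC n.pred_le (by simpa [div_eq_mul_inv] using hn)

lemma tendsto_pow_sub_pow_nhds_zero {a b : ℕ → ℝ}
    (ha : (fun n ↦ a n - 1) =O[atTop] fun n ↦ (n : ℝ)⁻¹)
    (hab : (fun n ↦ a n - b n) =o[atTop] fun n ↦ (n : ℝ)⁻¹) :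
    Tendsto (fun n ↦ a n ^ n - b n ^ n) atTop (𝓝 0) := by
  have hb : (fun n ↦ b n - 1) =O[atTop] fun n ↦ (n : ℝ)⁻¹ := by
    simpa using ha.sub hab.isBigO
  have hpow := (isBigO_pow_pred ha).norm_left.add (isBigO_pow_pred hb).norm_left
  have hscaled : (fun n ↦ (a n - b n) * n) =o[atTop] fun _ ↦ (1 : ℝ) :=
    (hab.mul_isBigO (isBigO_refl (fun n : ℕ ↦ (n : ℝ)) atTop)).trans_isBigO <|
      isBigO_of_le _ fun n ↦ by simpa using inv_mul_le_one (a := (n : ℝ))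
  have hprod := (hscaled.mul_isBigO hpow).congr_right fun _ ↦ mul_one 1
  refine (isLittleO_one_iff ℝ).1 ((isBigO_of_le _ fun n ↦ ?_).trans_isLittleO hprod)
  calc |a n ^ n - b n ^ n| ≤ |a n - b n| * n * max |a n| |b n| ^ (n - 1) := abs_pow_sub_pow_le ..
    _ ≤ |a n - b n| * n * (‖a n ^ (n - 1)‖ + ‖b n ^ (n - 1)‖) := by
      gcongr
      rcases max_choice |a n| |b n| with hmax | hmax <;> simp [hmax]
    _ = ‖(a n - b n) * n * (‖a n ^ (n - 1)‖ + ‖b n ^ (n - 1)‖)‖ := by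
      rw [norm_mul, norm_mul, Real.norm_natCast, Real.norm_eq_abs (a n - b n),
        Real.norm_of_nonneg (add_nonneg (norm_nonneg _) (norm_nonneg _))]

lemma isLittleO_one_add_sub_exp {α : Type*} {l : Filter α} {u g : α → ℝ} (hu : u =O[l] g)
    (hg : Tendsto g l (𝓝 0)) : (fun x ↦ 1 + u x - exp (u x)) =o[l] g := by
  have hexp := (Real.exp_sub_sum_range_succ_isLittleO_pow 1).comp_tendsto (hu.trans_tendsto hg)
  refine (hexp.neg_left.congr_left fun x ↦ ?_).trans_isBigO (by simpa [Function.comp_def] using hu)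
  simp [Finset.sum_range_succ]

lemma tendsto_one_add_mul_pow_sub_exp_pow {u : ℕ → ℝ}
    (hu : u =O[atTop] fun n ↦ (n : ℝ)⁻¹) (w : ℝ) :
    Tendsto (fun n ↦ (1 + w * u n) ^ n - (1 + w * (exp (u n) - 1)) ^ n) atTop (𝓝 0) := by
  refine tendsto_pow_sub_pow_nhds_zero (by simpa using hu.const_mul_left w) ?_
  have hexp := isLittleO_one_add_sub_exp hu tendsto_inv_atTop_nhds_zero_nat
  exact (hexp.const_mul_left w).congr_left fun n ↦ by ring

lemma isBigO_inv_of_eventually_mul_le_sq {σ : ℕ → ℝ} {c : ℝ} (hc : 0 < c)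
    (hσ : ∀ᶠ n : ℕ in atTop, c * n ≤ σ n ^ 2) : (fun n ↦ (σ n)⁻¹) =O[atTop] fun n ↦ (√n)⁻¹ := by
  refine IsBigO.of_bound (√c)⁻¹ ?_
  filter_upwards [hσ, eventually_gt_atTop 0] with n hn hn0
  have hsqrt : √c * √n ≤ |σ n| := by
    rw [← Real.sqrt_mul hc.le, ← Real.sqrt_sq_eq_abs]
    exact Real.sqrt_le_sqrt hn
  rw [norm_inv, norm_inv, Real.norm_eq_abs, Real.norm_of_nonneg (Real.sqrt_nonneg _), ← mul_inv]
  exact inv_anti₀ (by positivity) hsqrt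

end Asymptotics

section LikelihoodRatio

/-- The likelihood ratio `L_a` of `N(a,1)` with respect to `N(0,1)`. -/
noncomputable def gaussianLikRatio (a z : ℝ) : ℝ := exp (a * z - a ^ 2 / 2)

/-- The likelihood ratio of the mixture `q·N(a,1) + (1-q)·N(0,1)` with respect to `N(0,1)`. With
`a = 1/σ` it is the ratio `p_{σ,q}/φ_σ` evaluated at `σ z`. -/
noncomputable def mixLikRatio (a q z : ℝ) : ℝ := q * gaussianLikRatio a z + (1 - q)

lemma gaussianLikRatio_mul (a b z : ℝ) :
    gaussianLikRatio a z * gaussianLikRatio b z = exp (a * b) * gaussianLikRatio (a + b) z := by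
  simp only [gaussianLikRatio, ← exp_add]
  ring_nf

lemma integrable_gaussianLikRatio (a : ℝ) :
    Integrable (gaussianLikRatio a) (gaussianReal 0 1) := by
  unfold gaussianLikRatio
  simp_rw [sub_eq_add_neg, exp_add]
  exact (integrable_exp_mul_gaussianReal a).mul_const _

lemma integral_gaussianLikRatio (a : ℝ) : ∫ z, gaussianLikRatio a z ∂gaussianReal 0 1 = 1 := by
  have hmgf : ∫ z, exp (a * z) ∂gaussianReal 0 1 = exp (a ^ 2 / 2) := by
    simpa [mgf] using congrFun (mgf_id_gaussianReal (μ := 0) (v := 1)) a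
  simp only [gaussianLikRatio, exp_sub, integral_div, hmgf, div_self (exp_ne_zero _)]

lemma mixLikRatio_pos {q : ℝ} (hq : q ∈ Set.Icc (0 : ℝ) 1) (a z : ℝ) : 0 < mixLikRatio a q z := by
  have hL : 0 < gaussianLikRatio a z := exp_pos _
  rcases hq.1.eq_or_lt with rfl | hq0
  · simp [mixLikRatio]
  · exact add_pos_of_pos_of_nonneg (mul_pos hq0 hL) (sub_nonneg.2 hq.2)

@[fun_prop]
lemma measurable_mixLikRatio (a q : ℝ) : Measurable (mixLikRatio a q) := by
  unfold mixLikRatio gaussianLikRatio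
  fun_prop

lemma integrable_mixLikRatio (a q : ℝ) : Integrable (mixLikRatio a q) (gaussianReal 0 1) :=
  ((integrable_gaussianLikRatio a).const_mul q).add (integrable_const _)

lemma mixLikRatio_mul (a p b q z : ℝ) :
    mixLikRatio a p z * mixLikRatio b q z =
      p * q * exp (a * b) * gaussianLikRatio (a + b) z + p * (1 - q) * gaussianLikRatio a z +
        (1 - p) * mixLikRatio b q z := by
  simp only [mixLikRatio]
  linear_combination p * q * gaussianLikRatio_mul a b z

lemma memLp_two_mixLikRatio (a q : ℝ) : MemLp (mixLikRatio a q) 2 (gaussianReal 0 1) := by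
  rw [memLp_two_iff_integrable_sq (measurable_mixLikRatio a q).aestronglyMeasurable]
  simp_rw [sq, mixLikRatio_mul]
  exact (((integrable_gaussianLikRatio _).const_mul _).add
    ((integrable_gaussianLikRatio _).const_mul _)).add ((integrable_mixLikRatio _ _).const_mul _)

lemma integral_mixLikRatio (a q : ℝ) : ∫ z, mixLikRatio a q z ∂gaussianReal 0 1 = 1 := by
  simp only [mixLikRatio]
  rw [integral_add ((integrable_gaussianLikRatio a).const_mul q) (integrable_const _),
    integral_const_mul, integral_gaussianLikRatio]
  simp

lemma integral_mixLikRatio_mul (a p b q : ℝ) :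
    ∫ z, mixLikRatio a p z * mixLikRatio b q z ∂gaussianReal 0 1 =
      1 + p * q * (exp (a * b) - 1) := by
  have h₁ := (integrable_gaussianLikRatio (a + b)).const_mul (p * q * exp (a * b))
  have h₂ := (integrable_gaussianLikRatio a).const_mul (p * (1 - q))
  have h₃ := (integrable_mixLikRatio b q).const_mul (1 - p)
  simp_rw [mixLikRatio_mul]
  rw [integral_add (h₁.fun_add h₂) h₃, integral_add h₁ h₂]
  simp only [integral_const_mul, integral_gaussianLikRatio, integral_mixLikRatio]
  ring

/-- The squared `L²` distance between the likelihood ratios, with respect to `N(0,1)^T`, of the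
`T`-fold products of `q₁·N(a,1) + (1-q₁)·N(0,1)` and of `q₂·N(b,1) + (1-q₂)·N(0,1)`. -/
noncomputable def mixLikRatioSqDist (a q₁ b q₂ : ℝ) (T : ℕ) : ℝ :=
  ∫ z : Fin T → ℝ, (∏ i, mixLikRatio a q₁ (z i) - ∏ i, mixLikRatio b q₂ (z i)) ^ 2
    ∂Measure.pi fun _ ↦ gaussianReal 0 1

lemma mixLikRatioSqDist_eq (a q₁ b q₂ : ℝ) (T : ℕ) :
    mixLikRatioSqDist a q₁ b q₂ T =
      (1 + q₁ * q₁ * (exp (a * a) - 1)) ^ T - 2 * (1 + q₁ * q₂ * (exp (a * b) - 1)) ^ T +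
        (1 + q₂ * q₂ * (exp (b * b) - 1)) ^ T := by
  rw [mixLikRatioSqDist, integral_sq_sub (memLp_two_fintype_prod (memLp_two_mixLikRatio a q₁))
    (memLp_two_fintype_prod (memLp_two_mixLikRatio b q₂))]
  simp only [integral_prod_mul_prod, integral_mixLikRatio_mul, Fintype.card_fin]

lemma tendsto_mixLikRatioSqDist {a b : ℕ → ℝ} {q₁ q₂ : ℝ} (hab : ∀ n, q₁ * a n = q₂ * b n)
    (ha : a =O[atTop] fun n ↦ (√n)⁻¹) (hb : b =O[atTop] fun n ↦ (√n)⁻¹) :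
    Tendsto (fun n ↦ mixLikRatioSqDist (a n) q₁ (b n) q₂ n) atTop (𝓝 0) := by
  have isBigO_mul {x y : ℕ → ℝ} (hx : x =O[atTop] fun n ↦ (√n)⁻¹)
      (hy : y =O[atTop] fun n ↦ (√n)⁻¹) : (fun n ↦ x n * y n) =O[atTop] fun n ↦ (n : ℝ)⁻¹ := by
    simpa [← mul_inv] using hx.mul hy
  have hA := tendsto_one_add_mul_pow_sub_exp_pow (isBigO_mul ha ha) (q₁ * q₁)
  have hB := tendsto_one_add_mul_pow_sub_exp_pow (isBigO_mul ha hb) (q₁ * q₂)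
  have hC := tendsto_one_add_mul_pow_sub_exp_pow (isBigO_mul hb hb) (q₂ * q₂)
  have hAB (n : ℕ) : q₁ * q₂ * (a n * b n) = q₁ * q₁ * (a n * a n) := by
    linear_combination -(q₁ * a n * hab n)
  have hAC (n : ℕ) : q₂ * q₂ * (b n * b n) = q₁ * q₁ * (a n * a n) := by
    linear_combination -((q₁ * a n + q₂ * b n) * hab n)
  simp only [hAB] at hB
  simp only [hAC] at hC
  convert ((hB.const_mul 2).sub hA).sub hC using 1
  · ext n
    rw [mixLikRatioSqDist_eq]
    ring
  · simp

end LikelihoodRatio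

section PrivacyProfile

variable {σ : ℝ}

lemma mixDensity_eq_mul_mixLikRatio (hσ : σ ≠ 0) (q t : ℝ) :
    mixDensity σ q t = gaussianPDFReal 0 (σ ^ 2).toNNReal t * mixLikRatio σ⁻¹ q (σ⁻¹ * t) := by
  have hshift : gaussianPDFReal 1 (σ ^ 2).toNNReal t =
      gaussianPDFReal 0 (σ ^ 2).toNNReal t * gaussianLikRatio σ⁻¹ (σ⁻¹ * t) := by
    simp only [gaussianPDFReal, gaussianLikRatio, Real.coe_toNNReal _ (sq_nonneg σ)]
    rw [mul_assoc _ (exp _) (exp _), ← exp_add]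
    congr 2
    field_simp
    ring
  rw [mixDensity, hshift, mixLikRatio]
  ring

lemma plrv_mul (hσ : σ ≠ 0) (q z : ℝ) :
    plrv σ q (σ * z) = Real.log (mixLikRatio σ⁻¹ q z) := by
  have hv : (σ ^ 2).toNNReal ≠ 0 := by simpa using hσ
  rw [plrv, mixDensity_eq_mul_mixLikRatio hσ,
    mul_div_cancel_left₀ _ (gaussianPDFReal_pos _ _ _ hv).ne', inv_mul_cancel_left₀ hσ]

lemma mixMeasure_eq_map (hσ : σ ≠ 0) (q : ℝ) :
    mixMeasure σ q = ((gaussianReal 0 1).withDensity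
      fun z ↦ ENNReal.ofReal (mixLikRatio σ⁻¹ q z)).map (σ * ·) := by
  have hv : (σ ^ 2).toNNReal ≠ 0 := by simpa using hσ
  have hmap : (gaussianReal 0 1).map (σ * ·) = gaussianReal 0 (σ ^ 2).toNNReal := by
    rw [gaussianReal_map_const_mul, mul_zero, mul_one, Real.toNNReal_of_nonneg (sq_nonneg σ)]
  have hcomp : (fun z ↦ ENNReal.ofReal (mixLikRatio σ⁻¹ q z)) =
      (fun t ↦ ENNReal.ofReal (mixLikRatio σ⁻¹ q (σ⁻¹ * t))) ∘ (σ * ·) := by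
    ext z
    simp [inv_mul_cancel_left₀ hσ]
  rw [hcomp, ← withDensity_map (by fun_prop) (by fun_prop), hmap,
    gaussianReal_of_var_ne_zero _ hv,
    ← withDensity_mul _ (measurable_gaussianPDF _ _) (by fun_prop), mixMeasure]
  congr with t
  rw [mixDensity_eq_mul_mixLikRatio hσ, ENNReal.ofReal_mul (gaussianPDFReal_nonneg _ _ _)]
  rfl

lemma deltaS_eq_integral_gaussian (hσ : σ ≠ 0) {q : ℝ} (hq : q ∈ Set.Icc (0 : ℝ) 1) (T : ℕ)
    (ε : ℝ) :
    deltaS σ q T ε = ∫ z : Fin T → ℝ, max (∏ i, mixLikRatio σ⁻¹ q (z i) - exp ε) 0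
      ∂Measure.pi fun _ ↦ gaussianReal 0 1 := by
  have hint := integrable_mixLikRatio σ⁻¹ q
  have : IsFiniteMeasure ((gaussianReal 0 1).withDensity
      fun z ↦ ENNReal.ofReal (mixLikRatio σ⁻¹ q z)) := isFiniteMeasure_withDensity_ofReal hint.2
  have hplrv : Measurable (plrv σ q) := by
    unfold plrv mixDensity
    fun_prop
  rw [deltaS, mixMeasure_eq_map hσ,
    ← Measure.pi_map_pi fun _ ↦ (measurable_const_mul σ).aemeasurable,
    integral_map (Measurable.aemeasurable (by fun_prop))
      (Measurable.aestronglyMeasurable (by fun_prop))]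
  simp only [plrv_mul hσ]
  exact integral_pi_withDensity_max_one_sub_exp (mixLikRatio_pos hq _)
    (measurable_mixLikRatio _ _) hint ε

lemma sq_deltaS_sub_deltaS_le {σ₁ σ₂ q₁ q₂ : ℝ} (hσ₁ : σ₁ ≠ 0) (hσ₂ : σ₂ ≠ 0)
    (hq₁ : q₁ ∈ Set.Icc (0 : ℝ) 1) (hq₂ : q₂ ∈ Set.Icc (0 : ℝ) 1) (T : ℕ) (ε : ℝ) :
    (deltaS σ₁ q₁ T ε - deltaS σ₂ q₂ T ε) ^ 2 ≤ mixLikRatioSqDist σ₁⁻¹ q₁ σ₂⁻¹ q₂ T := by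
  rw [deltaS_eq_integral_gaussian hσ₁ hq₁, deltaS_eq_integral_gaussian hσ₂ hq₂]
  exact sq_integral_max_sub_integral_max_le (memLp_two_fintype_prod (memLp_two_mixLikRatio _ _))
    (memLp_two_fintype_prod (memLp_two_mixLikRatio _ _)) _

end PrivacyProfile

theorem deltaS_diff_tendsto_zero_general {q₁ q₂ : ℝ} (hq₁ : q₁ ∈ Set.Ioc (0 : ℝ) 1)
    (hq₂ : q₂ ∈ Set.Ioc (0 : ℝ) 1) {σ : ℕ → ℝ} {c : ℝ} (hc : 0 < c)
    (hgrowth : ∀ᶠ T : ℕ in atTop, c * T ≤ σ T ^ 2) :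
    TendstoUniformly
      (fun (T : ℕ) (ε : ℝ) ↦ |deltaS (σ T) q₁ T ε - deltaS (σ T * q₂ / q₁) q₂ T ε|)
      (fun _ ↦ 0) atTop := by
  have hq₁0 := hq₁.1.ne'
  have hq₂0 := hq₂.1.ne'
  have ha := isBigO_inv_of_eventually_mul_le_sq hc hgrowth
  have hb : (fun T ↦ (σ T * q₂ / q₁)⁻¹) =O[atTop] fun T : ℕ ↦ (√T)⁻¹ :=
    (ha.const_mul_left (q₁ / q₂)).congr_left fun T ↦ by field_simp
  have hratio (T : ℕ) : q₁ * (σ T)⁻¹ = q₂ * (σ T * q₂ / q₁)⁻¹ := by field_simp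
  have hbound := tendsto_mixLikRatioSqDist hratio ha hb
  refine Metric.tendstoUniformly_iff.2 fun η hη ↦ ?_
  filter_upwards [hbound.eventually_lt_const (sq_pos_of_pos hη), hgrowth, eventually_gt_atTop 0]
    with T hT hσT hT0 ε
  have hσ_sq : 0 < σ T ^ 2 := (mul_pos hc (Nat.cast_pos.2 hT0)).trans_le hσT
  have hσ0 : σ T ≠ 0 := (pow_ne_zero_iff two_ne_zero).1 hσ_sq.ne'
  have hle := sq_deltaS_sub_deltaS_le hσ0 (div_ne_zero (mul_ne_zero hσ0 hq₂0) hq₁0)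
    (Set.Ioc_subset_Icc_self hq₁) (Set.Ioc_subset_Icc_self hq₂) T ε
  simpa using abs_lt_of_sq_lt_sq (hle.trans_lt hT) hη.le

/-- If `σ_T² ≥ c·T` eventually (for some `c > 0`), then the tight privacy profiles of the
`T`-fold compositions with subsampling rates `q₁` (noise `σ_T`) and `q₂` (noise `σ_T·q₂/q₁`)
become asymptotically equal as `T → ∞`. -/
theorem deltaS_diff_tendsto_zero
    (q₁ q₂ : ℝ) (hq₁ : q₁ ∈ Set.Ioc (0 : ℝ) 1) (hq₂ : q₂ ∈ Set.Ioc (0 : ℝ) 1)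
    (ε : ℝ) (hε : 0 ≤ ε) (σ : ℕ → ℝ) (hσ : ∀ T, 1 ≤ T → 0 < σ T)
    (c : ℝ) (hc : 0 < c) (hgrowth : ∀ᶠ T : ℕ in Filter.atTop, c * T ≤ (σ T) ^ 2) :
    Filter.Tendsto
      (fun T : ℕ => |deltaS (σ T) q₁ T ε - deltaS (σ T * q₂ / q₁) q₂ T ε|)
      Filter.atTop (nhds 0) :=
  (deltaS_diff_tendsto_zero_general hq₁ hq₂ hc hgrowth).tendsto_at ε
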